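/- Let f : ℝⁿ → ℝ be twice continuously differentiable, let θ > 0, let x* be a critical point of f, and let Θ(x*) be the connected component of L_θ = {x : ‖∇f(x)‖ ≤ θ} containing x*. Suppose that no point of Θ(x*) has a positive definite Hessian, i.e., Λ⁺ ∩ Θ(x*) = ∅ where Λ⁺ = {x : ∇²f(x) is positive definite}. Then for Lebesgue-almost every l ∈ ℝⁿ, every critical point of the regularized function f_l lying in Θ(x*) is a strict saddle of f_l: its Hessian ∇²f has a negative eigenvalue. In particular, for almost every l, regularization creates no false minima in Θ(x*). -/

import Mathlib

/-!
The bad parameters `l` are covered by the negatives of the critical values of `∇f`, a null set by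
Sard's theorem for `C¹` maps between spaces of equal dimension. For any other `l`, the Hessian `H`
at a critical point `y` of `f_l` is invertible. If `y ∈ Θ(x*)`, then `H` is not positive definite,
so `⟪u, H u⟫ ≤ 0` for some `u ≠ 0`. Were `H` positive semidefinite, this would give
`⟪u, H u⟫ = 0`, hence `H u = 0` since `H` is symmetric (`eq_zero_of_inner_self_eq_zero`), which
contradicts invertibility. So `H` takes a negative value.
-/

open MeasureTheory Filter Topology
open scoped RealInnerProductSpace

lemma differentiable_gradient {n : ℕ} {f : EuclideanSpace ℝ (Fin n) → ℝ}
    (hf : ContDiff ℝ 2 f) : Differentiable ℝ (gradient f) := by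
  intro x
  have hd : DifferentiableAt ℝ (fderiv ℝ f) x :=
    (hf.fderiv_right (m := 1) (by norm_num)).differentiable (by norm_num) x
  exact ((InnerProductSpace.toDual ℝ
    (EuclideanSpace ℝ (Fin n))).symm.toContinuousLinearEquiv.differentiableAt).comp x hd

/-- The Hessian of a `C²` function, as the derivative of the gradient, is symmetric:
differentiating `⟪∇f z, a⟫ = Df(z) a` in `z` identifies it with the second Fréchet derivative. -/
lemma hessian_symm {n : ℕ} {f : EuclideanSpace ℝ (Fin n) → ℝ} (hf : ContDiff ℝ 2 f)
    (x u v : EuclideanSpace ℝ (Fin n)) :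
    ⟪u, fderiv ℝ (gradient f) x v⟫ = ⟪v, fderiv ℝ (gradient f) x u⟫ := by
  have hd : DifferentiableAt ℝ (fderiv ℝ f) x :=
    (hf.fderiv_right (m := 1) (by norm_num)).differentiable (by norm_num) x
  have key : ∀ a b, ⟪a, fderiv ℝ (gradient f) x b⟫ = fderiv ℝ (fderiv ℝ f) x b a := by
    intro a b
    have h1 := ((innerSL ℝ a).hasFDerivAt).comp x (differentiable_gradient hf x).hasFDerivAt
    have h2 := hd.hasFDerivAt.clm_apply (hasFDerivAt_const a x)
    have he : (innerSL ℝ a : EuclideanSpace ℝ (Fin n) → ℝ) ∘ gradient f =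
        fun z => fderiv ℝ f z a := by
      funext z
      rw [Function.comp_apply, innerSL_apply_apply, real_inner_comm]
      exact InnerProductSpace.toDual_symm_apply
    rw [he] at h1
    simpa using DFunLike.congr_fun (h1.unique h2) b
  rw [key, key]
  exact (hf.contDiffAt.isSymmSndFDerivAt (by simp)).eq v u

/-- An isotropic vector of a positive semidefinite symmetric operator lies in its kernel. -/
lemma eq_zero_of_inner_self_eq_zero {E : Type*} [NormedAddCommGroup E] [InnerProductSpace ℝ E]
    (H : E →L[ℝ] E) (hsymm : ∀ u v, ⟪u, H v⟫ = ⟪v, H u⟫) (hpos : ∀ u, 0 ≤ ⟪u, H u⟫)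
    {u : E} (hu : ⟪u, H u⟫ = 0) : H u = 0 := by
  -- The quadratic `t ↦ ⟪u + t • H u, H (u + t • H u)⟫` is nonnegative and vanishes at `t = 0`,
  -- so its discriminant, which is `4 * ‖H u‖ ^ 4`, is nonpositive.
  have hq : ∀ t : ℝ, 0 ≤ ⟪H u, H (H u)⟫ * (t * t) + (2 * ⟪H u, H u⟫) * t + 0 := by
    intro t
    have h := hpos (u + t • H u)
    simp only [map_add, map_smul, inner_add_left, inner_add_right, real_inner_smul_left,
      real_inner_smul_right, hu, hsymm u (H u)] at h
    linarith
  have hd := discrim_le_zero hq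
  rw [discrim] at hd
  rw [← inner_self_eq_zero (𝕜 := ℝ)]
  nlinarith [sq_nonneg ⟪H u, H u⟫]

/-- If no point of `Θ(x*)` (the connected component of the
small-gradient region containing the critical point `x*`) has a positive
definite Hessian, then for almost every `l ∈ ℝⁿ`, every critical point of the
regularized function `f_l` lying in `Θ(x*)` is a strict saddle of `f_l`: its
Hessian has a negative eigenvalue. -/
theorem no_posdef_hessian_implies_strict_saddles {n : ℕ}
    (f : EuclideanSpace ℝ (Fin n) → ℝ) (hf : ContDiff ℝ 2 f)
    (θ : ℝ) (hθ : 0 < θ) (xs : EuclideanSpace ℝ (Fin n)) (hxs : gradient f xs = 0)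
    (hnopd : {x : EuclideanSpace ℝ (Fin n) |
        ∀ u, u ≠ 0 → 0 < ⟪u, fderiv ℝ (gradient f) x u⟫} ∩
      connectedComponentIn
        {x : EuclideanSpace ℝ (Fin n) | ‖gradient f x‖ ≤ θ} xs = ∅) :
    ∀ᵐ l ∂(volume : Measure (EuclideanSpace ℝ (Fin n))),
      ∀ y ∈ connectedComponentIn
          {x : EuclideanSpace ℝ (Fin n) | ‖gradient f x‖ ≤ θ} xs,
        gradient f y + l = 0 → ∃ u, ⟪u, fderiv ℝ (gradient f) y u⟫ < 0 := by
  -- Sard's theorem, applied to `-∇f` because `l = -∇f y` at a critical point `y` of `f_l`.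
  have hnull : volume ((fun x => -gradient f x) ''
      {x | (-fderiv ℝ (gradient f) x).det = 0}) = 0 :=
    addHaar_image_eq_zero_of_det_fderivWithin_eq_zero volume
      (fun x _ => (differentiable_gradient hf x).hasFDerivAt.neg.hasFDerivWithinAt) (fun x hx => hx)
  filter_upwards [measure_eq_zero_iff_ae_notMem.mp hnull] with l hl y hy hyl
  by_contra! hpos
  have hnot : ¬ ∀ u, u ≠ 0 → 0 < ⟪u, fderiv ℝ (gradient f) y u⟫ := fun h =>
    Set.eq_empty_iff_forall_notMem.mp hnopd y ⟨h, hy⟩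
  push Not at hnot
  obtain ⟨u, hu0, hu⟩ := hnot
  have hker := eq_zero_of_inner_self_eq_zero _ (hessian_symm hf y) hpos (le_antisymm hu (hpos u))
  refine hl ⟨y, ?_, neg_eq_of_add_eq_zero_right hyl⟩
  by_contra hdet
  have hinj := (LinearMap.equivOfDetNeZero
    (-fderiv ℝ (gradient f) y : EuclideanSpace ℝ (Fin n) →L[ℝ] _).toLinearMap hdet).injective
  exact hu0 (hinj (a₁ := u) (a₂ := 0) (by
    change (-fderiv ℝ (gradient f) y) u = (-fderiv ℝ (gradient f) y) 0
    simp [hker]))
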